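/- Let a,b,c,x,y be distinct, let f be a polymatroid on {a,b,c}, and let f_x, f_y be polymatroids on {a,b,c,x} and {a,b,c,y} extending f. Then f_x and f_y are adhesive if and only if the following inequality holds for every permutation of the roles of a,b,c, for the exchange of (x, f_x) with (y, f_y), and for each of the four choices in the two braced alternatives: f_x(a,x|c) + f_x(a,b|x) + f_y(a,b|y) + f_y(c,y) + {f_x(b,x|ac) or f_y(b,y|ac)} + {f_x(c,x|ab) or f_y(c,y|ab)} ≥ f(a,b). -/

import Mathlib

open Finset

noncomputable section

variable {α : Type*} [DecidableEq α]

/-- `f` is a polymatroid with ground set `M`: it vanishes on `∅` and is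
non-negative, monotone and submodular on subsets of `M`. -/
def IsPolymatroid (M : Finset α) (f : Finset α → ℝ) : Prop :=
  f ∅ = 0 ∧
  (∀ A, A ⊆ M → 0 ≤ f A) ∧
  (∀ A B, A ⊆ B → B ⊆ M → f A ≤ f B) ∧
  (∀ A B, A ⊆ M → B ⊆ M → f (A ∪ B) + f (A ∩ B) ≤ f A + f B)

/-- `pmi f I J K` is the expression `f(I,J|K) = f(I∪K)+f(J∪K)−f(I∪J∪K)−f(K)`. -/
def pmi (f : Finset α → ℝ) (I J K : Finset α) : ℝ :=
  f (I ∪ K) + f (J ∪ K) - f (I ∪ J ∪ K) - f K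

/-- `pcd f I K` is the expression `f(I|K) = f(I∪K) − f(K)`. -/
def pcd (f : Finset α → ℝ) (I K : Finset α) : ℝ := f (I ∪ K) - f K

/-- Polymatroids `fX` on `M ∪ X` and `fY` on `M ∪ Y` have an amalgam: a common
polymatroid extension on `M ∪ X ∪ Y`. -/
def HaveAmalgam (M X Y : Finset α) (fX fY : Finset α → ℝ) : Prop :=
  ∃ g : Finset α → ℝ, IsPolymatroid (M ∪ X ∪ Y) g ∧
    (∀ A, A ⊆ M ∪ X → g A = fX A) ∧ (∀ A, A ⊆ M ∪ Y → g A = fY A)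

/-- Polymatroids `fX` on `M ∪ X` and `fY` on `M ∪ Y` are adhesive: they have a
modular common extension, i.e. one with `g(X,Y|M) = 0`. -/
def Adhesive (M X Y : Finset α) (fX fY : Finset α → ℝ) : Prop :=
  ∃ g : Finset α → ℝ, IsPolymatroid (M ∪ X ∪ Y) g ∧
    (∀ A, A ⊆ M ∪ X → g A = fX A) ∧ (∀ A, A ⊆ M ∪ Y → g A = fY A) ∧
    pmi g X Y M = 0

/-- The left-hand side of inequality (3) of Corollary 1, with the two braced
alternatives selected by booleans `s1, s2`. -/
def adLHS (fx fy : Finset α → ℝ) (x y a b c : α) (s1 s2 : Bool) : ℝ :=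
  pmi fx {a} {x} {c} + pmi fx {a} {b} {x} + pmi fy {a} {b} {y} + pmi fy {c} {y} ∅ +
  (if s1 then pmi fx {b} {x} {a, c} else pmi fy {b} {y} {a, c}) +
  (if s2 then pmi fx {c} {x} {a, b} else pmi fy {c} {y} {a, b})

/-!
A modular common extension `g` of `f_x` and `f_y` is determined by `h A = g (A ∪ {x, y})` for
`A ⊆ {a, b, c}`. Such an `h` comes from a modular extension exactly when it is submodular and
monotone at the top, has increments `h (A ∪ i) - h A` at most
`d i A = min (f_x (i | A ∪ x)) (f_y (i | A ∪ y))`, and stays below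
`u A = f_x (A ∪ x) + f_y (A ∪ y) - f A`, with equality at `{a, b, c}`. Take the values of `h` at
the pairs as small as the increments towards `{a, b, c}` allow, then those at the singletons as
large as possible, then the one at `∅` as small as possible: all constraints hold as soon as
`2 u(abc) ≤ u(a) + u(b) + d c ∅ + d a {c} + d c {a, b} + d b {a, c}` for every enumeration.

Since `d i A` exceeds the increment of `u` by `min (f_x (i, x | A)) (f_y (i, y | A))`, this reads
`f (a, b) ≤ f_x (a, b | x) + f_y (a, b | y)` plus four such minima. Each choice of the smaller
terms gives one inequality; those that take `f_x (c, x)` together with `f_x (a, x | c)`, or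
`f_y (c, y)` together with `f_y (a, y | c)`, hold in every polymatroid.
-/

theorem pmi_comm (f : Finset α → ℝ) (I J K : Finset α) : pmi f I J K = pmi f J I K := by
  rw [pmi, pmi, union_comm I J]
  ring

theorem pmi_singleton (f : Finset α → ℝ) (i j : α) (A : Finset α) :
    pmi f {i} {j} A =
      f (insert i A) + f (insert j A) - f (insert i (insert j A)) - f A := by
  rw [pmi, union_assoc, singleton_union, singleton_union, singleton_union]

theorem pmi_congr {f g : Finset α → ℝ} {N I J K : Finset α} (hfg : ∀ A ⊆ N, f A = g A)
    (hI : I ⊆ N) (hJ : J ⊆ N) (hK : K ⊆ N) : pmi f I J K = pmi g I J K := by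
  rw [pmi, pmi, hfg _ (union_subset hI hK), hfg _ (union_subset hJ hK),
    hfg _ (union_subset (union_subset hI hJ) hK), hfg _ hK]

theorem pcd_singleton (f : Finset α → ℝ) (i : α) (A : Finset α) :
    pcd f {i} A = f (insert i A) - f A := by
  rw [pcd, singleton_union]

theorem pmi_eq_pcd_sub_pcd (f : Finset α → ℝ) (I J K : Finset α) :
    pmi f I J K = pcd f I K - pcd f I (J ∪ K) := by
  rw [pmi, pcd, pcd, union_assoc]
  ring

theorem pmi_add_pmi_left_comm (f : Finset α → ℝ) (I J K L : Finset α) :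
    pmi f I J K + pmi f I L (J ∪ K) = pmi f I L K + pmi f I J (L ∪ K) := by
  simp only [pmi_eq_pcd_sub_pcd, union_left_comm L J K]
  ring

namespace IsPolymatroid

variable {M : Finset α} {f : Finset α → ℝ}

theorem pmi_nonneg (hf : IsPolymatroid M f) {I J K : Finset α}
    (hI : I ⊆ M) (hJ : J ⊆ M) (hK : K ⊆ M) : 0 ≤ pmi f I J K := by
  obtain ⟨-, -, mono, submod⟩ := hf
  have hsub := submod (I ∪ K) (J ∪ K) (union_subset hI hK) (union_subset hJ hK)
  have hle := mono K ((I ∪ K) ∩ (J ∪ K))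
    (subset_inter subset_union_right subset_union_right)
    (inter_subset_left.trans (union_subset hI hK))
  rw [← union_union_distrib_right] at hsub
  rw [pmi]
  linarith

theorem pcd_nonneg (hf : IsPolymatroid M f) {I K : Finset α} (hI : I ⊆ M) (hK : K ⊆ M) :
    0 ≤ pcd f I K :=
  sub_nonneg.2 (hf.2.2.1 _ _ subset_union_right (union_subset hI hK))

theorem pcd_union_le (hf : IsPolymatroid M f) {I J K : Finset α}
    (hI : I ⊆ M) (hJ : J ⊆ M) (hK : K ⊆ M) : pcd f I (J ∪ K) ≤ pcd f I K := by
  have hnonneg := hf.pmi_nonneg hI hJ hK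
  rwa [pmi_eq_pcd_sub_pcd, sub_nonneg] at hnonneg

theorem pmi_le_pmi_add_pmi (hf : IsPolymatroid M f) {I J K L : Finset α}
    (hI : I ⊆ M) (hJ : J ⊆ M) (hK : K ⊆ M) (hL : L ⊆ M) :
    pmi f I J K ≤ pmi f I L K + pmi f I J (L ∪ K) := by
  rw [← pmi_add_pmi_left_comm]
  exact le_add_of_nonneg_right (hf.pmi_nonneg hI hL (union_subset hJ hK))

theorem pmi_le_pmi_add_pmi_add_pmi (hf : IsPolymatroid M f) {I J K L N : Finset α}
    (hI : I ⊆ M) (hJ : J ⊆ M) (hK : K ⊆ M) (hL : L ⊆ M) (hN : N ⊆ M) :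
    pmi f I J K ≤ pmi f I J (L ∪ K) + pmi f N L K + pmi f I L (N ∪ K) := by
  have hIJ := hf.pmi_le_pmi_add_pmi hI hJ hK hL
  have hLI := hf.pmi_le_pmi_add_pmi hL hI hK hN
  rw [pmi_comm f L I, pmi_comm f L N, pmi_comm f L I] at hLI
  linarith

end IsPolymatroid

/-- Submodularity of `f` on the subsets of `M`, tested only on pairs of sets that differ from
their intersection by one element each. -/
def IsLocallySubmodular (M : Finset α) (f : Finset α → ℝ) : Prop :=
  ∀ A ⊆ M, ∀ i ∈ M, ∀ j ∈ M, i ∉ A → j ∉ A → i ≠ j → 0 ≤ pmi f {i} {j} A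

namespace IsLocallySubmodular

variable {M : Finset α} {f : Finset α → ℝ}

theorem insert_add_le (hf : IsLocallySubmodular M f) {A B : Finset α} {i : α} (hAB : A ⊆ B)
    (hB : B ⊆ M) (hi : i ∈ M) (hiB : i ∉ B) :
    f (insert i B) + f A ≤ f (insert i A) + f B := by
  suffices ∀ D ⊆ B \ A, f (insert i (D ∪ A)) + f A ≤ f (insert i A) + f (D ∪ A) by
    simpa only [sdiff_union_of_subset hAB] using this (B \ A) subset_rfl
  intro D
  induction D using Finset.induction_on with
  | empty => simp
  | insert d D hd ih =>
    intro hD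
    have hlocal := hf (D ∪ A) (by grind) i hi d (by grind) (by grind) (by grind) (by grind)
    rw [pmi_singleton] at hlocal
    rw [insert_union]
    linarith [ih (by grind)]

theorem union_add_le (hf : IsLocallySubmodular M f) {A B C : Finset α} (hAB : A ⊆ B)
    (hB : B ⊆ M) (hC : C ⊆ M) (hCB : Disjoint C B) :
    f (C ∪ B) + f A ≤ f (C ∪ A) + f B := by
  induction C using Finset.induction_on with
  | empty => simp [add_comm]
  | insert c C hc ih =>
    obtain ⟨hcB, hCB⟩ := disjoint_insert_left.1 hCB
    obtain ⟨hcM, hC⟩ := insert_subset_iff.1 hC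
    have hstep := hf.insert_add_le (union_subset_union_right hAB) (union_subset hC hB) hcM
      (notMem_union.2 ⟨hc, hcB⟩)
    rw [insert_union, insert_union]
    linarith [ih hC hCB]

theorem union_add_inter_le (hf : IsLocallySubmodular M f) {A B : Finset α} (hA : A ⊆ M)
    (hB : B ⊆ M) : f (A ∪ B) + f (A ∩ B) ≤ f A + f B := by
  have h := hf.union_add_le (A := A ∩ B) inter_subset_right hB (sdiff_subset.trans hA)
    (sdiff_disjoint : Disjoint (A \ B) B)
  rwa [sdiff_union_self_eq_union, sdiff_union_inter] at h

theorem le_insert (hf : IsLocallySubmodular M f) (hM : ∀ i ∈ M, f (M.erase i) ≤ f M)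
    {A : Finset α} {i : α} (hA : A ⊆ M) (hi : i ∈ M) : f A ≤ f (insert i A) := by
  by_cases hiA : i ∈ A
  · rw [insert_eq_of_mem hiA]
  · have h := hf.insert_add_le (subset_erase.2 ⟨hA, hiA⟩) (erase_subset i M) hi
      (notMem_erase i M)
    rw [insert_erase hi] at h
    linarith [hM i hi]

theorem le_of_subset (hf : IsLocallySubmodular M f) (hM : ∀ i ∈ M, f (M.erase i) ≤ f M)
    {A B : Finset α} (hAB : A ⊆ B) (hB : B ⊆ M) : f A ≤ f B := by
  suffices ∀ D ⊆ B, f A ≤ f (D ∪ A) by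
    simpa only [union_eq_left.2 hAB] using this B subset_rfl
  intro D
  induction D using Finset.induction_on with
  | empty => simp
  | insert d D _ ih =>
    intro hD
    obtain ⟨hd, hD⟩ := insert_subset_iff.1 hD
    rw [insert_union]
    exact (ih hD).trans (hf.le_insert hM ((union_subset hD hAB).trans hB) (hB hd))

theorem isPolymatroid (hf : IsLocallySubmodular M f) (hM : ∀ i ∈ M, f (M.erase i) ≤ f M)
    (h0 : f ∅ = 0) : IsPolymatroid M f :=
  ⟨h0, fun A hA => h0 ▸ hf.le_of_subset hM (empty_subset A) hA,
    fun _ _ => hf.le_of_subset hM, fun _ _ => hf.union_add_inter_le⟩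

end IsLocallySubmodular

/-- `h` is submodular on the subsets of `M`, attains the bound `u` at `M`, stays below `u`
elsewhere, and grows by at most `d i A` when `i` is added to `A`. The sets `A ∪ {x, y}` of a
modular common extension carry such a function of `A`, with `u` and `d` given by `jointBound`
and `incrementBound`. Monotonicity is required only towards `M`: submodularity propagates it. -/
structure IsCappedSubmodular (M : Finset α) (u : Finset α → ℝ) (d : α → Finset α → ℝ)
    (h : Finset α → ℝ) : Prop where
  top : h M = u M
  le : ∀ A ⊆ M, h A ≤ u A
  erase_le : ∀ i ∈ M, h (M.erase i) ≤ h M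
  pcd_le : ∀ A ⊆ M, ∀ i ∈ M, i ∉ A → pcd h {i} A ≤ d i A
  submodular : IsLocallySubmodular M h

/-- The value that modularity over `A` would force on `A ∪ {x, y}` in a common extension of
`fx` and `fy`; submodularity makes it an upper bound. -/
def jointBound (fx fy : Finset α → ℝ) (x y : α) (A : Finset α) : ℝ :=
  fx (insert x A) + fy (insert y A) - fx A

/-- The bound that `fx` and `fy` impose on the increment of a common extension when `i` is
added to `A ∪ {x, y}`. -/
def incrementBound (fx fy : Finset α → ℝ) (x y i : α) (A : Finset α) : ℝ :=
  min (pcd fx {i} (insert x A)) (pcd fy {i} (insert y A))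

/-- The common extension of `fx` and `fy` with value `h A` at `A ∪ {x, y}`. -/
def glue (fx fy h : Finset α → ℝ) (x y : α) (S : Finset α) : ℝ :=
  if x ∈ S then if y ∈ S then h (S \ {x, y}) else fx S else fy S

section Adhesion

variable {M : Finset α} {fx fy h : Finset α → ℝ} {x y : α}

theorem glue_of_subset (hx : x ∉ M) (hxy : x ≠ y) {S : Finset α} (hS : S ⊆ insert y M) :
    glue fx fy h x y S = fy S :=
  if_neg (by grind)

theorem glue_insert_left (hy : y ∉ M) (hxy : x ≠ y) {A : Finset α} (hA : A ⊆ M) :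
    glue fx fy h x y (insert x A) = fx (insert x A) := by
  rw [glue, if_pos (mem_insert_self x A), if_neg (by grind)]

theorem glue_insert_insert (hx : x ∉ M) (hy : y ∉ M) {A : Finset α} (hA : A ⊆ M) :
    glue fx fy h x y (insert x (insert y A)) = h A := by
  rw [glue, if_pos (by simp), if_pos (by simp)]
  congr 1
  grind

theorem glue_eq_left (hx : x ∉ M) (hy : y ∉ M) (hxy : x ≠ y) (hres : ∀ A ⊆ M, fx A = fy A)
    {S : Finset α} (hS : S ⊆ insert x M) : glue fx fy h x y S = fx S := by
  by_cases hxS : x ∈ S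
  · rw [← insert_erase hxS]
    exact glue_insert_left hy hxy (subset_insert_iff.1 hS)
  · have hSM : S ⊆ M := (subset_insert_iff_of_notMem hxS).1 hS
    rw [glue_of_subset hx hxy (hSM.trans (subset_insert y M)), hres S hSM]

theorem glue_pmi_base_nonneg (hx : x ∉ M) (hy : y ∉ M) (hxy : x ≠ y)
    (hh : IsCappedSubmodular M (jointBound fx fy x y) (incrementBound fx fy x y) h)
    (hres : ∀ A ⊆ M, fx A = fy A) {A : Finset α} (hA : A ⊆ M) :
    0 ≤ pmi (glue fx fy h x y) {x} {y} A := by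
  have hle := hh.le A hA
  rw [jointBound] at hle
  rw [pmi_singleton, glue_insert_insert hx hy hA, glue_insert_left hy hxy hA,
    glue_of_subset hx hxy (insert_subset_insert y hA),
    glue_of_subset hx hxy (hA.trans (subset_insert y M)), ← hres A hA]
  linarith

theorem glue_pmi_left_nonneg (hx : x ∉ M) (hy : y ∉ M) (hxy : x ≠ y)
    (hh : IsCappedSubmodular M (jointBound fx fy x y) (incrementBound fx fy x y) h)
    {A : Finset α} {i : α} (hA : A ⊆ M) (hi : i ∈ M) (hiA : i ∉ A) :
    0 ≤ pmi (glue fx fy h x y) {i} {x} (insert y A) := by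
  have hiM : insert i A ⊆ M := insert_subset hi hA
  have hle := (hh.pcd_le A hA i hi hiA).trans (min_le_right _ _)
  rw [pcd_singleton, pcd_singleton, insert_comm i y] at hle
  rw [pmi_singleton, insert_comm i x, insert_comm i y, glue_insert_insert hx hy hA,
    glue_insert_insert hx hy hiM, glue_of_subset hx hxy (insert_subset_insert y hiM),
    glue_of_subset hx hxy (insert_subset_insert y hA)]
  linarith

theorem glue_pmi_right_nonneg (hx : x ∉ M) (hy : y ∉ M) (hxy : x ≠ y)
    (hh : IsCappedSubmodular M (jointBound fx fy x y) (incrementBound fx fy x y) h)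
    {A : Finset α} {i : α} (hA : A ⊆ M) (hi : i ∈ M) (hiA : i ∉ A) :
    0 ≤ pmi (glue fx fy h x y) {i} {y} (insert x A) := by
  have hiM : insert i A ⊆ M := insert_subset hi hA
  have hle := (hh.pcd_le A hA i hi hiA).trans (min_le_left _ _)
  rw [pcd_singleton, pcd_singleton, insert_comm i x] at hle
  rw [pmi_singleton, insert_comm i y, insert_comm i x, insert_comm y x, insert_comm y x,
    glue_insert_insert hx hy hA, glue_insert_insert hx hy hiM, glue_insert_left hy hxy hiM,
    glue_insert_left hy hxy hA]
  linarith

theorem glue_pmi_both_nonneg (hx : x ∉ M) (hy : y ∉ M) (hh : IsLocallySubmodular M h)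
    {A : Finset α} {i j : α} (hA : A ⊆ M) (hi : i ∈ M) (hj : j ∈ M) (hiA : i ∉ A) (hjA : j ∉ A)
    (hij : i ≠ j) : 0 ≤ pmi (glue fx fy h x y) {i} {j} (insert x (insert y A)) := by
  have hiM : insert i A ⊆ M := insert_subset hi hA
  have hjM : insert j A ⊆ M := insert_subset hj hA
  have hlocal := hh A hA i hi j hj hiA hjA hij
  rw [pmi_singleton] at hlocal
  rwa [pmi_singleton, insert_comm j x, insert_comm j y, insert_comm i x, insert_comm i y,
    insert_comm i x, insert_comm i y, glue_insert_insert hx hy hA, glue_insert_insert hx hy hiM,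
    glue_insert_insert hx hy hjM, glue_insert_insert hx hy (insert_subset hi hjM)]

theorem glue_pmi_nonneg_of_subset_left (hx : x ∉ M) (hy : y ∉ M) (hxy : x ≠ y)
    (hfx : IsPolymatroid (insert x M) fx) (hres : ∀ A ⊆ M, fx A = fy A) {S : Finset α} {i j : α}
    (hsub : insert i (insert j S) ⊆ insert x M) : 0 ≤ pmi (glue fx fy h x y) {i} {j} S := by
  rw [pmi_congr (N := insert x M) (fun _ => glue_eq_left hx hy hxy hres)
    (by grind) (by grind) (by grind)]
  exact hfx.pmi_nonneg (by grind) (by grind) (by grind)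

theorem glue_pmi_nonneg_of_subset_right (hx : x ∉ M) (hxy : x ≠ y)
    (hfy : IsPolymatroid (insert y M) fy) {S : Finset α} {i j : α}
    (hsub : insert i (insert j S) ⊆ insert y M) : 0 ≤ pmi (glue fx fy h x y) {i} {j} S := by
  rw [pmi_congr (N := insert y M) (fun _ => glue_of_subset hx hxy)
    (by grind) (by grind) (by grind)]
  exact hfy.pmi_nonneg (by grind) (by grind) (by grind)

theorem glue_isLocallySubmodular (hx : x ∉ M) (hy : y ∉ M) (hxy : x ≠ y)
    (hfx : IsPolymatroid (insert x M) fx) (hfy : IsPolymatroid (insert y M) fy)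
    (hres : ∀ A ⊆ M, fx A = fy A)
    (hh : IsCappedSubmodular M (jointBound fx fy x y) (incrementBound fx fy x y) h) :
    IsLocallySubmodular (insert x (insert y M)) (glue fx fy h x y) := by
  intro S hS i hi j hj hiS hjS hij
  have left_with_y : ∀ k ∈ M, k ∉ S → x ∉ S → y ∈ S →
      0 ≤ pmi (glue fx fy h x y) {k} {x} S := fun k hk hkS hxS hyS => by
    rw [← insert_erase hyS]
    exact glue_pmi_left_nonneg hx hy hxy hh (by grind) hk (by grind)
  have right_with_x : ∀ k ∈ M, k ∉ S → y ∉ S → x ∈ S →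
      0 ≤ pmi (glue fx fy h x y) {k} {y} S := fun k hk hkS hyS hxS => by
    rw [← insert_erase hxS]
    exact glue_pmi_right_nonneg hx hy hxy hh (by grind) hk (by grind)
  by_cases hxmem : x ∈ insert i (insert j S)
  swap
  · exact glue_pmi_nonneg_of_subset_right hx hxy hfy (by grind)
  by_cases hymem : y ∈ insert i (insert j S)
  swap
  · exact glue_pmi_nonneg_of_subset_left hx hy hxy hfx hres (by grind)
  simp only [mem_insert] at hxmem hymem
  rcases hxmem with rfl | rfl | hxS <;> rcases hymem with rfl | rfl | hyS
  · exact absurd rfl hxy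
  · exact glue_pmi_base_nonneg hx hy hxy hh hres (by grind)
  · exact pmi_comm _ {j} _ _ ▸ left_with_y j (by grind) hjS hiS hyS
  · exact pmi_comm _ {x} _ _ ▸ glue_pmi_base_nonneg hx hy hxy hh hres (by grind)
  · exact absurd rfl hxy
  · exact left_with_y i (by grind) hiS hjS hyS
  · exact pmi_comm _ {j} _ _ ▸ right_with_x j (by grind) hjS hiS hxS
  · exact right_with_x i (by grind) hiS hjS hxS
  · have hSxy : S = insert x (insert y ((S.erase x).erase y)) := by grind
    rw [hSxy]
    exact glue_pmi_both_nonneg hx hy hh.submodular (by grind) (by grind) (by grind)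
      (by grind) (by grind) hij

theorem glue_isPolymatroid (hx : x ∉ M) (hy : y ∉ M) (hxy : x ≠ y)
    (hfx : IsPolymatroid (insert x M) fx) (hfy : IsPolymatroid (insert y M) fy)
    (hres : ∀ A ⊆ M, fx A = fy A)
    (hh : IsCappedSubmodular M (jointBound fx fy x y) (incrementBound fx fy x y) h) :
    IsPolymatroid (insert x (insert y M)) (glue fx fy h x y) := by
  refine (glue_isLocallySubmodular hx hy hxy hfx hfy hres hh).isPolymatroid ?_ ?_
  · have htop := hh.top
    rw [jointBound] at htop
    have hMx := hfx.2.2.1 M _ (subset_insert x M) subset_rfl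
    have hMy := hfy.2.2.1 M _ (subset_insert y M) subset_rfl
    have hresM := hres M subset_rfl
    intro i hi
    rw [glue_insert_insert hx hy subset_rfl]
    obtain rfl | rfl | hiM : i = x ∨ i = y ∨ i ∈ M := by simpa only [mem_insert] using hi
    · rw [erase_insert (by grind), glue_of_subset hx hxy subset_rfl]
      linarith
    · rw [insert_comm, erase_insert (by grind), glue_insert_left hy hxy subset_rfl]
      linarith
    · rw [erase_insert_of_ne (by grind), erase_insert_of_ne (by grind),
        glue_insert_insert hx hy (erase_subset i M)]
      exact hh.erase_le i hiM
  · rw [glue_of_subset hx hxy (empty_subset _), hfy.1]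

theorem isCappedSubmodular_of_extension {g : Finset α → ℝ}
    (hg : IsPolymatroid (insert x (insert y M)) g)
    (hgx : ∀ A ⊆ insert x M, g A = fx A) (hgy : ∀ A ⊆ insert y M, g A = fy A)
    (hmod : pmi g {x} {y} M = 0) :
    IsCappedSubmodular M (jointBound fx fy x y) (incrementBound fx fy x y)
      fun A => g (insert x (insert y A)) where
  top := by
    rw [pmi_singleton, hgx _ subset_rfl, hgy _ subset_rfl, hgx _ (subset_insert x M)] at hmod
    rw [jointBound]
    linarith
  le A hA := by
    have hnonneg : 0 ≤ pmi g {x} {y} A := hg.pmi_nonneg (by grind) (by grind) (by grind)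
    rw [pmi_singleton, hgx _ (insert_subset_insert x hA), hgy _ (insert_subset_insert y hA),
      hgx _ (hA.trans (subset_insert x M))] at hnonneg
    rw [jointBound]
    linarith
  erase_le i _ := hg.2.2.1 _ _
    (insert_subset_insert x (insert_subset_insert y (erase_subset i M))) subset_rfl
  pcd_le A hA i hi _ := by
    have hiM : insert i A ⊆ M := insert_subset hi hA
    have hleft : 0 ≤ pmi g {i} {y} (insert x A) :=
      hg.pmi_nonneg (by grind) (by grind) (by grind)
    have hright : 0 ≤ pmi g {i} {x} (insert y A) :=
      hg.pmi_nonneg (by grind) (by grind) (by grind)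
    rw [pmi_singleton, insert_comm y x, insert_comm i x, insert_comm i x, insert_comm i y,
      hgx _ (insert_subset_insert x hiM), hgx _ (insert_subset_insert x hA)] at hleft
    rw [pmi_singleton, insert_comm i x, insert_comm i y,
      hgy _ (insert_subset_insert y hiM), hgy _ (insert_subset_insert y hA)] at hright
    rw [incrementBound, pcd_singleton, pcd_singleton, pcd_singleton, insert_comm i x,
      insert_comm i y]
    exact le_min (by linarith) (by linarith)
  submodular A hA i hi j hj _ _ _ := by
    have hnonneg : 0 ≤ pmi g {i} {j} (insert x (insert y A)) :=
      hg.pmi_nonneg (by grind) (by grind) (by grind)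
    rw [pmi_singleton, insert_comm j x, insert_comm j y, insert_comm i x, insert_comm i y,
      insert_comm i x, insert_comm i y] at hnonneg
    rwa [pmi_singleton]

theorem adhesive_singleton_iff (hx : x ∉ M) (hy : y ∉ M) (hxy : x ≠ y)
    (hfx : IsPolymatroid (insert x M) fx) (hfy : IsPolymatroid (insert y M) fy)
    (hres : ∀ A ⊆ M, fx A = fy A) :
    Adhesive M {x} {y} fx fy ↔
      ∃ h, IsCappedSubmodular M (jointBound fx fy x y) (incrementBound fx fy x y) h := by
  have hground : M ∪ {x} ∪ {y} = insert x (insert y M) := by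
    rw [union_singleton, union_singleton, insert_comm]
  rw [Adhesive, hground, union_singleton, union_singleton]
  constructor
  · rintro ⟨g, hg, hgx, hgy, hmod⟩
    exact ⟨_, isCappedSubmodular_of_extension hg hgx hgy hmod⟩
  · rintro ⟨h, hh⟩
    refine ⟨glue fx fy h x y, glue_isPolymatroid hx hy hxy hfx hfy hres hh,
      fun S hS => glue_eq_left hx hy hxy hres hS, fun S hS => glue_of_subset hx hxy hS, ?_⟩
    have htop := hh.top
    rw [jointBound] at htop
    rw [pmi_singleton, glue_insert_insert hx hy subset_rfl, htop,
      glue_insert_left hy hxy subset_rfl, glue_of_subset hx hxy subset_rfl,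
      glue_of_subset hx hxy (subset_insert y M), hres M subset_rfl]
    ring

end Adhesion

/-- `i`, `j`, `k` enumerate the three elements of `M`. -/
structure IsTriple (M : Finset α) (i j k : α) : Prop where
  eq : {i, j, k} = M
  card : #M = 3

namespace IsTriple

variable {M : Finset α} {i j k : α}

theorem swap (h : IsTriple M i j k) : IsTriple M j i k :=
  ⟨(insert_comm j i {k}).trans h.eq, h.card⟩

theorem rotate (h : IsTriple M i j k) : IsTriple M j k i :=
  ⟨by rw [← h.eq, pair_comm k i, insert_comm], h.card⟩

theorem ne (h : IsTriple M i j k) : i ≠ j := by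
  rintro rfl
  have hcard := h.card
  rw [← h.eq, insert_eq_of_mem (mem_insert_self i {k})] at hcard
  exact absurd hcard (card_le_two.trans_lt (by norm_num)).ne

theorem mem (h : IsTriple M i j k) : i ∈ M :=
  h.eq ▸ mem_insert_self i {j, k}

theorem singleton_subset (h : IsTriple M i j k) : {i} ⊆ M :=
  singleton_subset_iff.2 h.mem

theorem pair_subset (h : IsTriple M i j k) : {i, j} ⊆ M :=
  insert_subset h.mem h.rotate.singleton_subset

theorem notMem_pair (h : IsTriple M i j k) : i ∉ ({j, k} : Finset α) := by
  simpa only [mem_insert, mem_singleton, not_or] using ⟨h.ne, h.rotate.rotate.ne.symm⟩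

theorem erase_eq (h : IsTriple M i j k) : M.erase i = {j, k} := by
  rw [← h.eq, erase_insert h.notMem_pair]

theorem sdiff_pair (h : IsTriple M i j k) : M \ {j, k} = {i} := by
  rw [← h.eq, insert_sdiff_cancel h.notMem_pair]

theorem sum_erase (h : IsTriple M i j k) (w : α → ℝ) : ∑ l ∈ M.erase i, w l = w j + w k := by
  rw [h.erase_eq, sum_pair h.rotate.ne]

end IsTriple

theorem isTriple_iff {M : Finset α} {i j k : α} (hM : #M = 3) :
    IsTriple M i j k ↔ {i, j, k} = M :=
  ⟨IsTriple.eq, fun h => ⟨h, hM⟩⟩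

theorem exists_isTriple_of_mem {M A : Finset α} {i : α} (hM : #M = 3) (hi : i ∈ M)
    (hA : A ⊆ M) (hiA : i ∉ A) :
    ∃ j k, IsTriple M i j k ∧ (A = ∅ ∨ A = {j} ∨ A = {j, k}) := by
  have hcard : #(M.erase i) = 2 := by rw [card_erase_of_mem hi, hM]
  obtain ⟨j, k, -, hjk⟩ := card_eq_two.1 hcard
  have htriple : IsTriple M i j k := ⟨by rw [← hjk, insert_erase hi], hM⟩
  have hAjk : A ⊆ {j, k} := hjk ▸ subset_erase.2 ⟨hA, hiA⟩
  have hcoe : (A : Set α) ⊆ {j, k} := coe_pair (a := j) ▸ coe_subset.2 hAjk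
  have hcases : A = ∅ ∨ A = {j} ∨ A = {k} ∨ A = {j, k} := by
    exact_mod_cast Set.subset_pair_iff_eq.1 hcoe
  rcases hcases with h | h | h | h
  · exact ⟨j, k, htriple, .inl h⟩
  · exact ⟨j, k, htriple, .inr (.inl h)⟩
  · exact ⟨k, j, htriple.rotate.rotate.swap, .inr (.inl h)⟩
  · exact ⟨j, k, htriple, .inr (.inr h)⟩

theorem exists_isTriple_of_ne {M A : Finset α} {i j : α} (hM : #M = 3) (hi : i ∈ M)
    (hj : j ∈ M) (hij : i ≠ j) (hA : A ⊆ M) (hiA : i ∉ A) (hjA : j ∉ A) :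
    ∃ k, IsTriple M i j k ∧ (A = ∅ ∨ A = {k}) := by
  have hji : j ∈ M.erase i := mem_erase.2 ⟨hij.symm, hj⟩
  have hcard : #((M.erase i).erase j) = 1 := by
    rw [card_erase_of_mem hji, card_erase_of_mem hi, hM]
  obtain ⟨k, hk⟩ := card_eq_one.1 hcard
  refine ⟨k, ⟨by rw [← hk, insert_erase hji, insert_erase hi], hM⟩, subset_singleton_iff.1 ?_⟩
  exact hk ▸ subset_erase.2 ⟨subset_erase.2 ⟨hA, hiA⟩, hjA⟩

/-- The function on the subsets of a three-element set `M` with value `z` at `∅`, `s i` at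
`{i}`, `t i` at `M \ {i}` and `m` at `M`. -/
def levelFunction (M : Finset α) (z : ℝ) (s t : α → ℝ) (m : ℝ) (A : Finset α) : ℝ :=
  match #A with
  | 0 => z
  | 1 => ∑ i ∈ A, s i
  | 2 => ∑ i ∈ M \ A, t i
  | _ => m

section LevelFunction

variable {M : Finset α} (z : ℝ) (s t : α → ℝ) (m : ℝ)

theorem levelFunction_empty : levelFunction M z s t m ∅ = z := by
  simp only [levelFunction, card_empty]

theorem levelFunction_singleton (i : α) : levelFunction M z s t m {i} = s i := by
  simp only [levelFunction, card_singleton, sum_singleton]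

theorem levelFunction_pair {i j k : α} (h : IsTriple M i j k) :
    levelFunction M z s t m {j, k} = t i := by
  simp only [levelFunction, card_pair h.rotate.ne, h.sdiff_pair, sum_singleton]

theorem levelFunction_self (hM : #M = 3) : levelFunction M z s t m M = m := by
  simp only [levelFunction, hM]

end LevelFunction

theorem isCappedSubmodular_levelFunction {M : Finset α} {u : Finset α → ℝ}
    {d : α → Finset α → ℝ} {z : ℝ} {s t : α → ℝ} (hM : #M = 3)
    (hz : z ≤ u ∅) (hs : ∀ i ∈ M, s i ≤ u {i}) (ht : ∀ i ∈ M, t i ≤ u (M.erase i))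
    (ht_top : ∀ i ∈ M, t i ≤ u M) (hds : ∀ i ∈ M, s i ≤ z + d i ∅)
    (hdt : ∀ i j k, IsTriple M i j k → t k ≤ s j + d i {j})
    (hdu : ∀ i ∈ M, u M ≤ t i + d i (M.erase i))
    (hst : ∀ i j k, IsTriple M i j k → z + t k ≤ s i + s j)
    (htu : ∀ i j k, IsTriple M i j k → s k + u M ≤ t i + t j) :
    IsCappedSubmodular M u d (levelFunction M z s t (u M)) where
  top := levelFunction_self z s t (u M) hM
  le A hA := by
    by_cases hAM : M ⊆ A
    · rw [hA.antisymm hAM, levelFunction_self z s t _ hM]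
    · obtain ⟨i, hi, hiA⟩ := not_subset.1 hAM
      obtain ⟨j, k, htriple, rfl | rfl | rfl⟩ := exists_isTriple_of_mem hM hi hA hiA
      · rwa [levelFunction_empty]
      · rw [levelFunction_singleton]
        exact hs j htriple.rotate.mem
      · rw [levelFunction_pair z s t _ htriple, ← htriple.erase_eq]
        exact ht i hi
  erase_le i hi := by
    obtain ⟨j, k, htriple, -⟩ := exists_isTriple_of_mem hM hi (empty_subset M) (notMem_empty i)
    rw [htriple.erase_eq, levelFunction_pair z s t _ htriple, levelFunction_self z s t _ hM]
    exact ht_top i hi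
  pcd_le A hA i hi hiA := by
    obtain ⟨j, k, htriple, rfl | rfl | rfl⟩ := exists_isTriple_of_mem hM hi hA hiA
    · rw [pcd_singleton, insert_empty_eq, levelFunction_singleton, levelFunction_empty]
      linarith [hds i hi]
    · rw [pcd_singleton, levelFunction_pair z s t _ htriple.rotate.rotate,
        levelFunction_singleton]
      linarith [hdt i j k htriple]
    · rw [pcd_singleton, htriple.eq, levelFunction_self z s t _ hM,
        levelFunction_pair z s t _ htriple, ← htriple.erase_eq]
      linarith [hdu i hi]
  submodular A hA i hi j hj hiA hjA hij := by
    obtain ⟨k, htriple, rfl | rfl⟩ := exists_isTriple_of_ne hM hi hj hij hA hiA hjA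
    · rw [pmi_singleton, insert_empty_eq, insert_empty_eq, levelFunction_singleton,
        levelFunction_singleton, levelFunction_pair z s t _ htriple.rotate.rotate,
        levelFunction_empty]
      linarith [hst i j k htriple]
    · rw [pmi_singleton, htriple.eq, levelFunction_pair z s t _ htriple,
        levelFunction_pair z s t _ htriple.swap, levelFunction_self z s t _ hM,
        levelFunction_singleton]
      linarith [htu i j k htriple]

/-- The properties of the bounds `u` and `d` of `jointBound` and `incrementBound` that the
construction of a function satisfying `IsCappedSubmodular` relies on. -/
structure IsBoundPair (M : Finset α) (u : Finset α → ℝ) (d : α → Finset α → ℝ) : Prop where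
  insert_le : ∀ A ⊆ M, ∀ i ∈ M, u (insert i A) ≤ u A + d i A
  antitone : ∀ A ⊆ M, ∀ i ∈ M, ∀ j ∈ M, d i (insert j A) ≤ d i A
  nonneg : ∀ A ⊆ M, ∀ i ∈ M, 0 ≤ d i A

/-- The least value at `M \ {i}` that the bound on the increment towards `M` permits. -/
def coatomMin (M : Finset α) (u : Finset α → ℝ) (d : α → Finset α → ℝ) (i : α) : ℝ :=
  u M - d i (M.erase i)

/-- The largest value at `{i}` compatible with the value `coatomMin` at the two-element sets
that contain `i`. -/
def atomCap (M : Finset α) (u : Finset α → ℝ) (d : α → Finset α → ℝ) (i : α) : ℝ :=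
  min (u {i}) (∑ j ∈ M.erase i, coatomMin M u d j - u M)

/-- The bound `atomCap` lowered so that submodularity at `∅` leaves room for a value at `∅`
from which `{i}` is reached within `d i ∅`. -/
def atomVal (M : Finset α) (u : Finset α → ℝ) (d : α → Finset α → ℝ) (i : α) : ℝ :=
  min (atomCap M u d i) (∑ j ∈ M.erase i, atomCap M u d j + d i ∅ - coatomMin M u d i)

/-- The inequality, for an enumeration `a, b, c` of `M`, that a function satisfying
`IsCappedSubmodular M u d` entails. -/
def CapInequality (M : Finset α) (u : Finset α → ℝ) (d : α → Finset α → ℝ) (a b c : α) : Prop :=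
  coatomMin M u d b + coatomMin M u d c ≤ u {a} + u {b} + d c ∅ + d a {c}

section Triple

variable {M : Finset α} {u : Finset α → ℝ} {d : α → Finset α → ℝ} {i j k : α}

theorem atomCap_eq (h : IsTriple M i j k) : atomCap M u d i =
    min (u {i}) (coatomMin M u d j + coatomMin M u d k - u M) := by
  rw [atomCap, h.sum_erase]

theorem atomVal_eq (h : IsTriple M i j k) : atomVal M u d i =
    min (atomCap M u d i) (atomCap M u d j + atomCap M u d k + d i ∅ - coatomMin M u d i) := by
  rw [atomVal, h.sum_erase]

namespace IsBoundPair

theorem singleton_le (hb : IsBoundPair M u d) (hi : i ∈ M) : u {i} ≤ u ∅ + d i ∅ :=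
  hb.insert_le ∅ (empty_subset M) i hi

theorem singleton_antitone (hb : IsBoundPair M u d) (hi : i ∈ M) (hj : j ∈ M) :
    d i {j} ≤ d i ∅ :=
  hb.antitone ∅ (empty_subset M) i hi j hj

theorem coatomMin_le_top (hb : IsBoundPair M u d) (hi : i ∈ M) : coatomMin M u d i ≤ u M :=
  sub_le_self _ (hb.nonneg _ (erase_subset i M) i hi)

theorem coatomMin_le (hb : IsBoundPair M u d) (hi : i ∈ M) :
    coatomMin M u d i ≤ u (M.erase i) := by
  have hle := hb.insert_le _ (erase_subset i M) i hi
  rw [insert_erase hi] at hle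
  exact sub_le_iff_le_add.2 hle

theorem coatomMin_le_add (hb : IsBoundPair M u d) (h : IsTriple M i j k) :
    coatomMin M u d k ≤ u {i} + d j {i} := by
  have hle := hb.coatomMin_le h.rotate.rotate.mem
  rw [h.rotate.rotate.erase_eq, pair_comm] at hle
  exact hle.trans (hb.insert_le {i} h.singleton_subset j h.rotate.mem)

theorem top_le_coatomMin_add (hb : IsBoundPair M u d) (h : IsTriple M i j k) :
    u M ≤ coatomMin M u d j + d j {i} := by
  have hanti := hb.antitone {i} h.singleton_subset j h.rotate.mem k h.rotate.rotate.mem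
  rw [coatomMin, h.rotate.erase_eq]
  linarith

theorem coatomMin_le_atomCap_add (hb : IsBoundPair M u d) (h : IsTriple M i j k) :
    coatomMin M u d k ≤ atomCap M u d i + d j {i} := by
  rw [atomCap_eq h, ← sub_le_iff_le_add]
  exact le_min (by linarith [hb.coatomMin_le_add h]) (by linarith [hb.top_le_coatomMin_add h])

theorem coatomMin_add_coatomMin_le_atomCap (hb : IsBoundPair M u d) (h : IsTriple M i j k)
    (hcap : CapInequality M u d j k i) :
    coatomMin M u d k + coatomMin M u d i ≤
      atomCap M u d j + atomCap M u d k + d i ∅ + d j {i} := by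
  have hij := hb.singleton_antitone h.mem h.rotate.mem
  have hik := hb.singleton_antitone h.mem h.rotate.rotate.mem
  have htop_j := hb.top_le_coatomMin_add h
  have htop_i := hb.top_le_coatomMin_add h.swap
  have hj := hb.coatomMin_le_add h.rotate.rotate
  have hk := hb.coatomMin_le_add h.swap
  rw [CapInequality] at hcap
  rw [atomCap_eq h.rotate, atomCap_eq h.rotate.rotate]
  rcases min_cases (u {j}) (coatomMin M u d k + coatomMin M u d i - u M) with
      ⟨hmin_j, -⟩ | ⟨hmin_j, -⟩ <;>
    rcases min_cases (u {k}) (coatomMin M u d i + coatomMin M u d j - u M) with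
      ⟨hmin_k, -⟩ | ⟨hmin_k, -⟩ <;>
    rw [hmin_j, hmin_k] <;> linarith

end IsBoundPair

namespace IsCappedSubmodular

variable {h : Finset α → ℝ}

theorem coatomMin_le (hh : IsCappedSubmodular M u d h) (hi : i ∈ M) :
    coatomMin M u d i ≤ h (M.erase i) := by
  have hle := hh.pcd_le _ (erase_subset i M) i hi (notMem_erase i M)
  rw [pcd_singleton, insert_erase hi, hh.top] at hle
  rw [coatomMin]
  linarith

theorem capInequality (hh : IsCappedSubmodular M u d h) (htriple : IsTriple M i j k) :
    CapInequality M u d i j k := by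
  have hi := hh.le {i} htriple.singleton_subset
  have hj := hh.le {j} htriple.rotate.singleton_subset
  have hij := hh.submodular ∅ (empty_subset M) i htriple.mem j htriple.rotate.mem
    (notMem_empty i) (notMem_empty j) htriple.ne
  have hk := hh.pcd_le ∅ (empty_subset M) k htriple.rotate.rotate.mem (notMem_empty k)
  have hki := hh.pcd_le {k} htriple.rotate.rotate.singleton_subset i htriple.mem
    (notMem_singleton.2 htriple.rotate.rotate.ne.symm)
  have hcoatom_j := hh.coatomMin_le htriple.rotate.mem
  have hcoatom_k := hh.coatomMin_le htriple.rotate.rotate.mem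
  rw [pmi_singleton, insert_empty_eq, insert_empty_eq] at hij
  rw [pcd_singleton, insert_empty_eq] at hk
  rw [pcd_singleton, pair_comm] at hki
  rw [htriple.rotate.erase_eq] at hcoatom_j
  rw [htriple.rotate.rotate.erase_eq] at hcoatom_k
  rw [CapInequality]
  linarith

end IsCappedSubmodular

theorem atomVal_le (i : α) : atomVal M u d i ≤ u {i} :=
  (min_le_left _ _).trans (min_le_left _ _)

theorem atomVal_add_top_le (h : IsTriple M i j k) :
    atomVal M u d i + u M ≤ coatomMin M u d j + coatomMin M u d k := by
  rw [← le_sub_iff_add_le]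
  exact (min_le_left _ _).trans ((atomCap_eq h).trans_le (min_le_right _ _))

namespace IsBoundPair

theorem atomVal_le_add (hb : IsBoundPair M u d) (hi : i ∈ M) :
    atomVal M u d i ≤ u ∅ + d i ∅ :=
  (atomVal_le i).trans (hb.singleton_le hi)

theorem coatomMin_le_atomVal_add (hb : IsBoundPair M u d) (h : IsTriple M i j k)
    (hcap : CapInequality M u d j k i) : coatomMin M u d k ≤ atomVal M u d i + d j {i} := by
  rw [atomVal_eq h, ← sub_le_iff_le_add]
  refine le_min ?_ ?_
  · linarith [hb.coatomMin_le_atomCap_add h]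
  · linarith [hb.coatomMin_add_coatomMin_le_atomCap h hcap]

theorem coatomMin_le_atomVal_add_empty (hb : IsBoundPair M u d) (h : IsTriple M i j k)
    (hcap : CapInequality M u d j k i) : coatomMin M u d k ≤ atomVal M u d i + d j ∅ := by
  linarith [hb.coatomMin_le_atomVal_add h hcap, hb.singleton_antitone h.rotate.mem h.mem]

theorem atomVal_add_coatomMin_le_of_ne (hb : IsBoundPair M u d) (h : IsTriple M i j k)
    (hcap : CapInequality M u d i j k) (hj : atomVal M u d j ≠ atomCap M u d j) :
    atomVal M u d i + coatomMin M u d i ≤ atomVal M u d j + atomVal M u d k + d i ∅ := by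
  have hj_eq : atomVal M u d j =
      atomCap M u d k + atomCap M u d i + d j ∅ - coatomMin M u d j := by
    rw [atomVal_eq h.rotate] at hj ⊢
    exact (min_choice _ _).resolve_left hj
  have hi : atomVal M u d i ≤ atomCap M u d i := min_le_left _ _
  have hcap_k := hb.coatomMin_le_atomCap_add h.rotate.rotate.swap.rotate
  have hk := hb.coatomMin_le_atomVal_add_empty h.rotate.rotate hcap
  linarith [hb.singleton_antitone h.rotate.mem h.rotate.rotate.mem]

theorem atomVal_add_coatomMin_le (hb : IsBoundPair M u d) (h : IsTriple M i j k)
    (hcap_ij : CapInequality M u d i j k) (hcap_ik : CapInequality M u d i k j) :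
    atomVal M u d i + coatomMin M u d i ≤ atomVal M u d j + atomVal M u d k + d i ∅ := by
  by_cases hj : atomVal M u d j = atomCap M u d j
  · by_cases hk : atomVal M u d k = atomCap M u d k
    · have hi := (atomVal_eq (u := u) (d := d) h).trans_le (min_le_right _ _)
      linarith
    · linarith [hb.atomVal_add_coatomMin_le_of_ne h.swap.rotate hcap_ik hk]
  · exact hb.atomVal_add_coatomMin_le_of_ne h hcap_ij hj

end IsBoundPair

theorem IsBoundPair.exists_isCappedSubmodular (hb : IsBoundPair M u d) (hM : #M = 3)
    (hcap : ∀ a b c, IsTriple M a b c → CapInequality M u d a b c) :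
    ∃ h, IsCappedSubmodular M u d h := by
  have hne : M.Nonempty := card_pos.1 (by rw [hM]; norm_num)
  refine ⟨_, isCappedSubmodular_levelFunction hM
    (z := M.sup' hne fun i => atomVal M u d i - d i ∅) (s := atomVal M u d)
    (t := coatomMin M u d) ?_ (fun i _ => atomVal_le i) (fun i => hb.coatomMin_le)
    (fun i => hb.coatomMin_le_top) ?_ ?_ ?_ ?_ ?_⟩
  · exact sup'_le _ _ fun i hi => sub_le_iff_le_add.2 (hb.atomVal_le_add hi)
  · exact fun i hi => sub_le_iff_le_add.1 (le_sup' (fun i => atomVal M u d i - d i ∅) hi)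
  · exact fun i j k h => hb.coatomMin_le_atomVal_add h.swap (hcap _ _ _ h.rotate.rotate.swap)
  · exact fun i _ => (sub_add_cancel _ _).ge
  · intro i j k h
    refine le_sub_iff_add_le.1 (sup'_le _ _ fun l hl => ?_)
    rw [← h.eq, mem_insert, mem_insert, mem_singleton] at hl
    rcases hl with rfl | rfl | rfl
    · linarith [hb.coatomMin_le_atomVal_add_empty h.swap (hcap _ _ _ h.rotate.rotate.swap)]
    · linarith [hb.coatomMin_le_atomVal_add_empty h (hcap _ _ _ h.rotate)]
    · linarith [hb.atomVal_add_coatomMin_le h.rotate.rotate (hcap _ _ _ h.rotate.rotate)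
        (hcap _ _ _ h.rotate.swap)]
  · exact fun i j k h => atomVal_add_top_le h.rotate.rotate

theorem IsBoundPair.exists_isCappedSubmodular_iff (hb : IsBoundPair M u d) (hM : #M = 3) :
    (∃ h, IsCappedSubmodular M u d h) ↔
      ∀ a b c, IsTriple M a b c → CapInequality M u d a b c :=
  ⟨fun ⟨_, hh⟩ _ _ _ => hh.capInequality, hb.exists_isCappedSubmodular hM⟩

end Triple

/-- The gap between `incrementBound` and the increment of `jointBound`: the smaller of the
dependences of `i` on `x` and on `y` given `A`. -/
def slack (fx fy : Finset α → ℝ) (x y i : α) (A : Finset α) : ℝ :=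
  min (pmi fx {i} {x} A) (pmi fy {i} {y} A)

section Slack

variable {M : Finset α} {fx fy : Finset α → ℝ} {x y : α}

theorem slack_comm (fx fy : Finset α → ℝ) (x y i : α) (A : Finset α) :
    slack fx fy x y i A = slack fy fx y x i A :=
  min_comm _ _

theorem slack_le_left (fx fy : Finset α → ℝ) (x y i : α) (A : Finset α) :
    slack fx fy x y i A ≤ pmi fx {i} {x} A :=
  min_le_left _ _

theorem slack_le_right (fx fy : Finset α → ℝ) (x y i : α) (A : Finset α) :
    slack fx fy x y i A ≤ pmi fy {i} {y} A :=
  min_le_right _ _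

theorem slack_eq_or_eq (fx fy : Finset α → ℝ) (x y i : α) (A : Finset α) :
    slack fx fy x y i A = pmi fx {i} {x} A ∨ slack fx fy x y i A = pmi fy {i} {y} A :=
  min_choice _ _

theorem slack_nonneg (hfx : IsPolymatroid (insert x M) fx) (hfy : IsPolymatroid (insert y M) fy)
    {i : α} {A : Finset α} (hi : i ∈ M) (hA : A ⊆ M) : 0 ≤ slack fx fy x y i A :=
  le_min (hfx.pmi_nonneg (by grind) (by grind) (by grind))
    (hfy.pmi_nonneg (by grind) (by grind) (by grind))

theorem incrementBound_eq_pcd_add_slack (hres : ∀ A ⊆ M, fx A = fy A) {i : α} {A : Finset α}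
    (hi : i ∈ M) (hA : A ⊆ M) :
    incrementBound fx fy x y i A =
      jointBound fx fy x y (insert i A) - jointBound fx fy x y A + slack fx fy x y i A := by
  rw [incrementBound, slack, min_comm (pmi _ _ _ _), ← min_add_add_left]
  simp only [pcd_singleton, pmi_singleton, jointBound, hres A hA,
    hres _ (insert_subset hi hA), insert_comm i x, insert_comm i y]
  congr 1 <;> ring

theorem pmi_jointBound (fx fy : Finset α → ℝ) (x y i j : α) (A : Finset α) :
    pmi (jointBound fx fy x y) {i} {j} A =
      pmi fx {i} {j} (insert x A) + pmi fy {i} {j} (insert y A) - pmi fx {i} {j} A := by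
  simp only [pmi_singleton, jointBound, insert_comm _ x, insert_comm _ y]
  ring

theorem isBoundPair_jointBound_incrementBound (hfx : IsPolymatroid (insert x M) fx)
    (hfy : IsPolymatroid (insert y M) fy) (hres : ∀ A ⊆ M, fx A = fy A) :
    IsBoundPair M (jointBound fx fy x y) (incrementBound fx fy x y) where
  insert_le A hA i hi := by
    rw [incrementBound_eq_pcd_add_slack hres hi hA]
    linarith [slack_nonneg hfx hfy hi hA]
  antitone A hA i hi j hj := by
    rw [incrementBound, incrementBound, insert_comm x, insert_comm y, insert_eq j, insert_eq j]
    exact min_le_min (hfx.pcd_union_le (by grind) (by grind) (by grind))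
      (hfy.pcd_union_le (by grind) (by grind) (by grind))
  nonneg A hA i hi :=
    le_min (hfx.pcd_nonneg (by grind) (by grind)) (hfy.pcd_nonneg (by grind) (by grind))

theorem capInequality_iff_pmi_le_slack (hres : ∀ A ⊆ M, fx A = fy A) {a b c : α}
    (h : IsTriple M a b c) :
    CapInequality M (jointBound fx fy x y) (incrementBound fx fy x y) a b c ↔
      pmi fx {a} {b} ∅ ≤ pmi fx {a} {b} {x} + pmi fy {a} {b} {y} +
        slack fx fy x y c ∅ + slack fx fy x y a {c} +
        slack fx fy x y b {a, c} + slack fx fy x y c {a, b} := by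
  have ha := h.mem
  have hb := h.rotate.mem
  have hc := h.rotate.rotate.mem
  have hpmi := pmi_jointBound fx fy x y a b ∅
  rw [pmi_singleton, insert_empty_eq, insert_empty_eq, insert_empty_eq, insert_empty_eq] at hpmi
  rw [CapInequality, coatomMin, coatomMin,
    incrementBound_eq_pcd_add_slack hres hb (erase_subset b M),
    incrementBound_eq_pcd_add_slack hres hc (erase_subset c M),
    incrementBound_eq_pcd_add_slack hres hc (empty_subset M),
    incrementBound_eq_pcd_add_slack hres ha h.rotate.rotate.singleton_subset,
    insert_erase hb, insert_erase hc, h.rotate.erase_eq, h.rotate.rotate.erase_eq,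
    insert_empty_eq, pair_comm c a]
  constructor <;> intro hle <;> linarith

theorem forall_le_adLHS_iff {t : ℝ} {a b c : α} :
    (∀ s1 s2, t ≤ adLHS fx fy x y a b c s1 s2) ↔
      t ≤ pmi fx {a} {x} {c} + pmi fx {a} {b} {x} + pmi fy {a} {b} {y} + pmi fy {c} {y} ∅ +
        slack fx fy x y b {a, c} + slack fx fy x y c {a, b} := by
  simp only [Bool.forall_bool, adLHS, slack, Bool.false_eq_true, if_true, if_false,
    ← min_add_add_left, ← min_add_add_right, le_min_iff]
  tauto

theorem capInequality_iff_forall_le_adLHS (hfx : IsPolymatroid (insert x M) fx)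
    (hfy : IsPolymatroid (insert y M) fy) (hres : ∀ A ⊆ M, fx A = fy A) {a b c : α}
    (h : IsTriple M a b c) :
    CapInequality M (jointBound fx fy x y) (incrementBound fx fy x y) a b c ↔
      ∀ s1 s2, pmi fx {a} {b} ∅ ≤ adLHS fx fy x y a b c s1 s2 ∧
        pmi fx {a} {b} ∅ ≤ adLHS fy fx y x a b c s1 s2 := by
  have ha : {a} ⊆ M := h.singleton_subset
  have hb : {b} ⊆ M := h.rotate.singleton_subset
  have hc : {c} ⊆ M := h.rotate.rotate.singleton_subset
  have hslack_b := slack_nonneg hfx hfy h.rotate.mem h.swap.rotate.pair_subset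
  have hslack_c := slack_nonneg hfx hfy h.rotate.rotate.mem h.pair_subset
  have hx := hfx.pmi_le_pmi_add_pmi_add_pmi (I := {a}) (J := {b}) (K := ∅) (L := {x})
    (N := {c}) (by grind) (by grind) (by grind) (by grind) (by grind)
  have hy := hfy.pmi_le_pmi_add_pmi_add_pmi (I := {a}) (J := {b}) (K := ∅) (L := {y})
    (N := {c}) (by grind) (by grind) (by grind) (by grind) (by grind)
  have hresab : pmi fx {a} {b} ∅ = pmi fy {a} {b} ∅ :=
    pmi_congr hres ha hb (empty_subset M)
  have hx_nonneg : 0 ≤ pmi fx {a} {b} {x} := hfx.pmi_nonneg (by grind) (by grind) (by grind)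
  have hy_nonneg : 0 ≤ pmi fy {a} {b} {y} := hfy.pmi_nonneg (by grind) (by grind) (by grind)
  simp only [union_empty] at hx hy
  rw [capInequality_iff_pmi_le_slack hres h]
  simp only [forall_and, forall_le_adLHS_iff, slack_comm fy fx]
  constructor
  · intro hle
    constructor <;> linarith [slack_le_left fx fy x y a {c}, slack_le_right fx fy x y a {c},
      slack_le_left fx fy x y c ∅, slack_le_right fx fy x y c ∅]
  · rintro ⟨hxy, hyx⟩
    rcases slack_eq_or_eq fx fy x y c ∅ with hc | hc <;>
      rcases slack_eq_or_eq fx fy x y a {c} with ha | ha <;> linarith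

end Slack

/-- `f_x` and `f_y` are adhesive iff inequality (3) holds for all
permutations of `a,b,c`, both orders of `(x,f_x)` and `(y,f_y)`, and all four
choices of the braced alternatives. -/
theorem statement_11 (a b c x y : α) (hnd : ([a, b, c, x, y] : List α).Nodup)
    (f fx fy : Finset α → ℝ)
    (hf : IsPolymatroid {a, b, c} f)
    (hfx : IsPolymatroid {a, b, c, x} fx) (hfy : IsPolymatroid {a, b, c, y} fy)
    (hresx : ∀ A ⊆ ({a, b, c} : Finset α), fx A = f A)
    (hresy : ∀ A ⊆ ({a, b, c} : Finset α), fy A = f A) :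
    Adhesive {a, b, c} {x} {y} fx fy ↔
      ∀ a' b' c' : α, ({a', b', c'} : Finset α) = {a, b, c} →
        ∀ s1 s2 : Bool,
          pmi f {a'} {b'} ∅ ≤ adLHS fx fy x y a' b' c' s1 s2 ∧
          pmi f {a'} {b'} ∅ ≤ adLHS fy fx y x a' b' c' s1 s2 := by
  simp only [List.nodup_cons, List.mem_cons, List.not_mem_nil, not_or, or_false] at hnd
  obtain ⟨⟨hab, hac, hax, hay⟩, ⟨hbc, hbx, hby⟩, ⟨hcx, hcy⟩, hxy, -⟩ := hnd
  have hM : #{a, b, c} = 3 := card_eq_three.2 ⟨a, b, c, hab, hac, hbc, rfl⟩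
  have hres : ∀ A ⊆ ({a, b, c} : Finset α), fx A = fy A := fun A hA =>
    (hresx A hA).trans (hresy A hA).symm
  have hground (z : α) : ({a, b, c, z} : Finset α) = insert z {a, b, c} := by grind
  rw [hground] at hfx hfy
  rw [adhesive_singleton_iff (by grind) (by grind) hxy hfx hfy hres,
    (isBoundPair_jointBound_incrementBound hfx hfy hres).exists_isCappedSubmodular_iff hM]
  refine forall₃_congr fun a' b' c' => (imp_congr_left (isTriple_iff hM)).trans
    (imp_congr_right fun heq => ?_)
  have htriple := (isTriple_iff hM).2 heq
  rw [capInequality_iff_forall_le_adLHS hfx hfy hres htriple,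
    pmi_congr hresx htriple.singleton_subset htriple.rotate.singleton_subset (empty_subset _)]
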